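/- Let 𝓛 and 𝓛' be ergodic symmetric generator matrices on the same finite state space Ω with |Ω| ≥ 2 (so both have uniform stationary distribution). Let ω assign a positive weight to each transition of 𝓛, and for each transition (α,β) of 𝓛' fix one 𝓛-path γ_{α,β} from α to β. Then τ(𝓛) ≤ τ(𝓛') · max over all transitions (σ,η) of 𝓛 of the quantity (1/(𝓛[σ→η]·ω(σ,η))) · Σ_{(α,β) transition of 𝓛' such that γ_{α,β} uses (σ,η)} 𝓛'[α→β]·|γ_{α,β}|_ω, where each use of (σ,η) in a path is counted with multiplicity. -/

import Mathlib

/-!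
The heart of the matter is the comparison of Dirichlet forms `𝓔_{L'}(f) ≤ M · 𝓔_L(f)`
(`dirForm_le_of_paths`).  For a transition `(α, β)` of `L'`, the difference `f α - f β` telescopes
along `γ_{α,β}`, and the weighted Cauchy–Schwarz inequality gives
`(f α - f β)² ≤ |γ|_ω · ∑_{steps (σ,η) of γ} (f σ - f η)² / ω(σ,η)` (`sq_sub_le_path`).
Multiplying by `L' α β`, summing over `(α, β)` and exchanging the order of summation, the coefficient
of `L σ η * (f σ - f η)²` is the congestion of `(σ, η)`, which is at most `M`.

Dividing by the variance and taking infima gives `Gap(L') ≤ M · Gap(L)`.  To pass to the inverses it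
remains to know that the gaps are positive: ergodicity of `L'` yields a Poincaré inequality
`(f a - f b)² ≤ C_{a,b} · 𝓔_{L'}(f)` by induction along a chain of transitions, so `Gap(L') > 0`,
and likewise for `L`.
-/

open Finset
open scoped Classical

section Markov

variable {Ω : Type*} [Fintype Ω]

/-- A generator matrix: nonnegative off-diagonal entries, zero row sums. -/
def IsGenerator (L : Ω → Ω → ℝ) : Prop :=
  (∀ x y : Ω, x ≠ y → 0 ≤ L x y) ∧ (∀ x : Ω, ∑ y : Ω, L x y = 0)

/-- A transition of a generator matrix. -/
def IsTransition (L : Ω → Ω → ℝ) (x y : Ω) : Prop := x ≠ y ∧ 0 < L x y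

/-- Ergodicity: the directed graph of transitions is strongly connected. -/
def IsErgodicGen (L : Ω → Ω → ℝ) : Prop :=
  ∀ x y : Ω, Relation.ReflTransGen (IsTransition L) x y

/-- Reversibility with respect to a distribution π. -/
def IsReversible (L : Ω → Ω → ℝ) (π : Ω → ℝ) : Prop :=
  ∀ x y : Ω, π x * L x y = π y * L y x

/-- The variance form. -/
noncomputable def VarForm (π : Ω → ℝ) (f : Ω → ℝ) : ℝ :=
  (1 / 2) * ∑ a : Ω, ∑ b : Ω, π a * π b * (f a - f b) ^ 2

/-- The Dirichlet form. -/
noncomputable def DirForm (π : Ω → ℝ) (L : Ω → Ω → ℝ) (f : Ω → ℝ) : ℝ :=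
  (1 / 2) * ∑ a : Ω, ∑ b : Ω, π a * L a b * (f a - f b) ^ 2

/-- The spectral gap: infimum (= minimum) of the Rayleigh quotient over nonconstant functions. -/
noncomputable def specGap (π : Ω → ℝ) (L : Ω → Ω → ℝ) : ℝ :=
  sInf {r : ℝ | ∃ f : Ω → ℝ, (∃ a b : Ω, f a ≠ f b) ∧ r = DirForm π L f / VarForm π f}

/-- The relaxation time, with the convention that it equals 1 on a one-point space. -/
noncomputable def relaxTime (π : Ω → ℝ) (L : Ω → Ω → ℝ) : ℝ :=
  if ∃ a b : Ω, a ≠ b then 1 / specGap π L else 1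

/-- The uniform distribution on a finite type. -/
noncomputable def unif (Ω : Type*) [Fintype Ω] : Ω → ℝ := fun _ => 1 / (Fintype.card Ω : ℝ)

end Markov

section Paths

variable {Ω : Type*} [Fintype Ω] [DecidableEq Ω]

/-- `γ` is an `L`-path from `a` to `b`: a sequence of at least two states, starting at `a`,
ending at `b`, each consecutive pair being a transition of `L`. -/
def IsLPath (L : Ω → Ω → ℝ) (a b : Ω) (γ : List Ω) : Prop :=
  2 ≤ γ.length ∧ γ.head? = some a ∧ γ.getLast? = some b ∧ γ.Chain' (IsTransition L)

/-- The `ω`-weight of a path: the sum of the weights of its steps. -/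
noncomputable def pathWeight (ω : Ω → Ω → ℝ) (γ : List Ω) : ℝ :=
  ((γ.zip γ.tail).map fun p => ω p.1 p.2).sum

/-- The length `|γ|` of a path (number of steps). -/
def pathLen (γ : List Ω) : ℕ := γ.length - 1

/-- The number of times the path `γ` uses the transition `(σ,η)`, with multiplicity. -/
def pathUses (γ : List Ω) (σ η : Ω) : ℕ := (γ.zip γ.tail).count (σ, η)

end Paths

/-! ### Positivity of the forms and of the spectral gap -/

section Gap

variable {Ω : Type*} [Fintype Ω]

theorem term_nonneg {L : Ω → Ω → ℝ} (hgen : IsGenerator L) (f : Ω → ℝ) (a b : Ω) :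
    0 ≤ L a b * (f a - f b) ^ 2 := by
  by_cases h : a = b
  · simp [h]
  · exact mul_nonneg (hgen.1 a b h) (sq_nonneg _)

theorem term_eq_zero {L : Ω → Ω → ℝ} (hgen : IsGenerator L) (f : Ω → ℝ) {a b : Ω}
    (h : ¬ IsTransition L a b) : L a b * (f a - f b) ^ 2 = 0 := by
  by_cases hab : a = b
  · simp [hab]
  · have h0 : L a b = 0 :=
      le_antisymm (not_lt.1 fun hlt => h ⟨hab, hlt⟩) (hgen.1 a b hab)
    simp [h0]

theorem dirForm_unif (L : Ω → Ω → ℝ) (f : Ω → ℝ) :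
    DirForm (unif Ω) L f =
      (1 / 2) * (1 / (Fintype.card Ω : ℝ)) * ∑ a : Ω, ∑ b : Ω, L a b * (f a - f b) ^ 2 := by
  unfold DirForm unif
  simp only [mul_assoc, Finset.mul_sum]

theorem varForm_unif (f : Ω → ℝ) :
    VarForm (unif Ω) f =
      (1 / 2) * (1 / (Fintype.card Ω : ℝ)) ^ 2 * ∑ a : Ω, ∑ b : Ω, (f a - f b) ^ 2 := by
  unfold VarForm unif
  simp only [mul_assoc, Finset.mul_sum, pow_two (1 / (Fintype.card Ω : ℝ))]

theorem dirForm_nonneg {L : Ω → Ω → ℝ} (hgen : IsGenerator L) (f : Ω → ℝ) :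
    0 ≤ DirForm (unif Ω) L f := by
  rw [dirForm_unif]
  exact mul_nonneg (by positivity)
    (Finset.sum_nonneg fun a _ => Finset.sum_nonneg fun b _ => term_nonneg hgen f a b)

theorem varForm_pos {f : Ω → ℝ} (hf : ∃ a b : Ω, f a ≠ f b) : 0 < VarForm (unif Ω) f := by
  obtain ⟨a, b, hab⟩ := hf
  have : Nonempty Ω := ⟨a⟩
  have hcard : (0 : ℝ) < Fintype.card Ω := by exact_mod_cast Fintype.card_pos
  rw [varForm_unif]
  refine mul_pos (by positivity) ?_
  refine Finset.sum_pos' (fun x _ => Finset.sum_nonneg fun y _ => sq_nonneg _)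
    ⟨a, Finset.mem_univ a, ?_⟩
  refine Finset.sum_pos' (fun y _ => sq_nonneg _) ⟨b, Finset.mem_univ b, ?_⟩
  have := sub_ne_zero.2 hab
  positivity

/-- A pointwise Poincaré inequality: along a chain of transitions from `a` to `b`, each increment of
`f` is controlled by a single summand of the Dirichlet form. -/
theorem exists_sq_sub_le {L : Ω → Ω → ℝ} (hgen : IsGenerator L) {a b : Ω}
    (h : Relation.ReflTransGen (IsTransition L) a b) :
    ∃ C : ℝ, 0 ≤ C ∧ ∀ f : Ω → ℝ, (f a - f b) ^ 2 ≤ C * DirForm (unif Ω) L f := by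
  induction h with
  | refl => exact ⟨0, le_rfl, fun f => by simp⟩
  | @tail b c _ hbc ih =>
    obtain ⟨C, hC, hCf⟩ := ih
    have hL := hbc.2
    have : Nonempty Ω := ⟨a⟩
    have hcard : (0 : ℝ) < Fintype.card Ω := by exact_mod_cast Fintype.card_pos
    refine ⟨2 * C + 2 * (2 * Fintype.card Ω / L b c), by positivity, fun f => ?_⟩
    have hstep : (f b - f c) ^ 2 ≤ 2 * Fintype.card Ω / L b c * DirForm (unif Ω) L f := by
      have h1 : L b c * (f b - f c) ^ 2 ≤ ∑ x : Ω, ∑ y : Ω, L x y * (f x - f y) ^ 2 :=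
        (Finset.single_le_sum (f := fun y => L b y * (f b - f y) ^ 2)
          (fun y _ => term_nonneg hgen f b y) (Finset.mem_univ c)).trans
        (Finset.single_le_sum (f := fun x => ∑ y : Ω, L x y * (f x - f y) ^ 2)
          (fun x _ => Finset.sum_nonneg fun y _ => term_nonneg hgen f x y) (Finset.mem_univ b))
      rw [dirForm_unif]
      calc (f b - f c) ^ 2 = (L b c * (f b - f c) ^ 2) / L b c := by field_simp
        _ ≤ (∑ x : Ω, ∑ y : Ω, L x y * (f x - f y) ^ 2) / L b c := by gcongr
        _ = _ := by field_simp
    have h2 := hCf f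
    nlinarith [sq_nonneg ((f a - f b) - (f b - f c))]

theorem specGap_pos {L : Ω → Ω → ℝ} (hgen : IsGenerator L) (herg : IsErgodicGen L)
    (hne : ∃ a b : Ω, a ≠ b) : 0 < specGap (unif Ω) L := by
  choose C hC hCf using fun a b => exists_sq_sub_le hgen (herg a b)
  obtain ⟨a₀, b₀, hab⟩ := hne
  set K : ℝ := (1 / 2) * (1 / (Fintype.card Ω : ℝ)) ^ 2 * ∑ a : Ω, ∑ b : Ω, C a b with hK
  have hK0 : 0 ≤ K :=
    mul_nonneg (by positivity) (Finset.sum_nonneg fun a _ => Finset.sum_nonneg fun b _ => hC a b)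
  have hvar : ∀ f : Ω → ℝ, VarForm (unif Ω) f ≤ K * DirForm (unif Ω) L f := by
    intro f
    rw [varForm_unif, hK, mul_assoc _ (∑ a : Ω, ∑ b : Ω, C a b)]
    refine mul_le_mul_of_nonneg_left ?_ (by positivity)
    simp only [Finset.sum_mul]
    exact Finset.sum_le_sum fun a _ => Finset.sum_le_sum fun b _ => hCf a b f
  -- `K + 1` instead of `K` avoids a separate argument that `K ≠ 0`.
  have hpos : 0 < 1 / (K + 1) := by positivity
  refine hpos.trans_le (le_csInf ?_ ?_)
  · exact ⟨_, fun x => if x = a₀ then 1 else 0, ⟨a₀, b₀, by simp [hab.symm]⟩, rfl⟩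
  · rintro r ⟨f, hf, rfl⟩
    rw [div_le_div_iff₀ (by positivity) (varForm_pos hf)]
    nlinarith [hvar f, dirForm_nonneg hgen f]

end Gap

/-! ### Paths -/

section PathLemmas

variable {Ω : Type*} [Fintype Ω] [DecidableEq Ω]

theorem sum_map_eq_sum_count (g : Ω → Ω → ℝ) (l : List (Ω × Ω)) :
    (l.map fun p => g p.1 p.2).sum = ∑ σ : Ω, ∑ η : Ω, (l.count (σ, η) : ℝ) * g σ η := by
  rw [← Fintype.sum_prod_type' (f := fun σ η => (l.count (σ, η) : ℝ) * g σ η)]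
  induction l with
  | nil => simp
  | cons p l ih =>
    simp only [List.map_cons, List.sum_cons, ih, Prod.mk.eta, List.count_cons, Nat.cast_add,
      add_mul, Finset.sum_add_distrib]
    simp [add_comm]

/-- The inductive step of the weighted Cauchy–Schwarz inequality. -/
theorem cauchy_step {x y w W S : ℝ} (hw : 0 < w) (hW : 0 ≤ W) (hS : 0 ≤ S)
    (h : y ^ 2 ≤ W * S) : (x + y) ^ 2 ≤ (w + W) * (x ^ 2 / w + S) := by
  have hcross : 2 * (x * y) ≤ w * S + W * (x ^ 2 / w) := by
    refine le_trans (le_abs_self _) (abs_le_of_sq_le_sq ?_ (by positivity))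
    have h1 : w * S * (W * (x ^ 2 / w)) = x ^ 2 * (W * S) := by field_simp
    nlinarith [sq_nonneg (w * S - W * (x ^ 2 / w)), mul_le_mul_of_nonneg_left h (sq_nonneg x)]
  have h2 : w * (x ^ 2 / w) = x ^ 2 := by field_simp
  nlinarith

theorem pathWeight_cons_cons (ω : Ω → Ω → ℝ) (a b : Ω) (l : List Ω) :
    pathWeight ω (a :: b :: l) = ω a b + pathWeight ω (b :: l) := by
  simp [pathWeight]

theorem pathWeight_nonneg {L ω : Ω → Ω → ℝ} (hω : ∀ x y, IsTransition L x y → 0 ≤ ω x y) :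
    ∀ γ : List Ω, γ.IsChain (IsTransition L) → 0 ≤ pathWeight ω γ
  | [], _ => by simp [pathWeight]
  | [a], _ => by simp [pathWeight]
  | a :: b :: l, h => by
    rw [List.isChain_cons_cons] at h
    rw [pathWeight_cons_cons]
    exact add_nonneg (hω a b h.1) (pathWeight_nonneg hω (b :: l) h.2)

/-- Weighted Cauchy–Schwarz for the telescoping sum of `f` along a path. The last factor is the sum
of `(f σ - f η)² / ω σ η` over the steps `(σ, η)` of the path, written as a path weight. -/
theorem sq_sub_le_path {L ω : Ω → Ω → ℝ} (hω : ∀ x y, IsTransition L x y → 0 < ω x y)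
    (f : Ω → ℝ) (b : Ω) : ∀ (a : Ω) (l : List Ω), (a :: l).IsChain (IsTransition L) →
      (a :: l).getLast? = some b →
      (f a - f b) ^ 2 ≤ pathWeight ω (a :: l) *
        pathWeight (fun σ η => (f σ - f η) ^ 2 / ω σ η) (a :: l)
  | a, [], _, hb => by
    have : a = b := by simpa using hb
    simp [this, pathWeight]
  | a, c :: l, h, hb => by
    rw [List.isChain_cons_cons] at h
    rw [List.getLast?_cons_cons] at hb
    have ih := sq_sub_le_path hω f b c l h.2 hb
    rw [pathWeight_cons_cons, pathWeight_cons_cons]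
    have := cauchy_step (x := f a - f c) (hω a c h.1)
      (pathWeight_nonneg (fun x y hxy => (hω x y hxy).le) _ h.2)
      (pathWeight_nonneg (fun x y hxy => div_nonneg (sq_nonneg (f x - f y)) (hω x y hxy).le) _ h.2)
      ih
    rwa [sub_add_sub_cancel] at this

theorem pathUses_eq_zero {L : Ω → Ω → ℝ} {σ η : Ω} (hn : ¬ IsTransition L σ η) :
    ∀ γ : List Ω, γ.IsChain (IsTransition L) → pathUses γ σ η = 0
  | [], _ => by simp [pathUses]
  | [a], _ => by simp [pathUses]
  | a :: b :: l, h => by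
    rw [List.isChain_cons_cons] at h
    have ih := pathUses_eq_zero hn (b :: l) h.2
    have hne : (a, b) ≠ (σ, η) := by
      rintro h'
      obtain ⟨rfl, rfl⟩ := Prod.mk.inj h'
      exact hn h.1
    simp only [pathUses, List.tail_cons, List.zip_cons_cons] at ih ⊢
    rw [List.count_cons_of_ne hne, ih]

/-- Comparison of Dirichlet forms: if the congestion of every transition of `L` is at most `M`, then
`𝓔_{L'} ≤ M · 𝓔_L`. -/
theorem dirForm_le_of_paths {L L' : Ω → Ω → ℝ} (hgen : IsGenerator L) (hgen' : IsGenerator L')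
    {ω : Ω → Ω → ℝ} (hω : ∀ x y, IsTransition L x y → 0 < ω x y)
    {γpath : Ω → Ω → List Ω}
    (hγ : ∀ α β, IsTransition L' α β → IsLPath L α β (γpath α β)) {M : ℝ}
    (hM : ∀ σ η : Ω, IsTransition L σ η → (1 / (L σ η * ω σ η)) *
          (∑ α : Ω, ∑ β : Ω,
            if IsTransition L' α β then
              (pathUses (γpath α β) σ η : ℝ) * L' α β * pathWeight ω (γpath α β)
            else 0) ≤ M) (f : Ω → ℝ) :
    DirForm (unif Ω) L' f ≤ M * DirForm (unif Ω) L f := by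
  set T : Ω → Ω → Ω → Ω → ℝ := fun σ η α β =>
    if IsTransition L' α β then
      (pathUses (γpath α β) σ η : ℝ) * L' α β * pathWeight ω (γpath α β)
    else 0 with hT
  have hstep : ∀ α β, L' α β * (f α - f β) ^ 2 ≤
      ∑ σ : Ω, ∑ η : Ω, (f σ - f η) ^ 2 / ω σ η * T σ η α β := by
    intro α β
    by_cases h : IsTransition L' α β
    · obtain ⟨-, hhead, hlast, hchain⟩ := hγ α β h
      have hcs : (f α - f β) ^ 2 ≤ pathWeight ω (γpath α β) *
          pathWeight (fun σ η => (f σ - f η) ^ 2 / ω σ η) (γpath α β) := by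
        obtain ⟨l, hl⟩ := List.head?_eq_some_iff.1 hhead
        rw [hl] at hlast hchain ⊢
        exact sq_sub_le_path hω f β α l hchain hlast
      calc L' α β * (f α - f β) ^ 2
          ≤ L' α β * (pathWeight ω (γpath α β) *
            pathWeight (fun σ η => (f σ - f η) ^ 2 / ω σ η) (γpath α β)) :=
            mul_le_mul_of_nonneg_left hcs h.2.le
        _ = _ := by
            rw [pathWeight.eq_1 (fun σ η => (f σ - f η) ^ 2 / ω σ η),
              sum_map_eq_sum_count (fun σ η => (f σ - f η) ^ 2 / ω σ η)]
            simp only [Finset.mul_sum, hT, if_pos h, pathUses]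
            refine Finset.sum_congr rfl fun σ _ => Finset.sum_congr rfl fun η _ => ?_
            ring
    · simp [hT, h, term_eq_zero hgen' f h]
  have hcong : ∀ σ η, (f σ - f η) ^ 2 / ω σ η * ∑ α : Ω, ∑ β : Ω, T σ η α β ≤
      M * (L σ η * (f σ - f η) ^ 2) := by
    intro σ η
    by_cases h : IsTransition L σ η
    · have hL := h.2
      have hw := hω σ η h
      calc (f σ - f η) ^ 2 / ω σ η * ∑ α : Ω, ∑ β : Ω, T σ η α β
          = (L σ η * (f σ - f η) ^ 2) *
              ((1 / (L σ η * ω σ η)) * ∑ α : Ω, ∑ β : Ω, T σ η α β) := by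
            field_simp
        _ ≤ (L σ η * (f σ - f η) ^ 2) * M :=
            mul_le_mul_of_nonneg_left (hM σ η h) (term_nonneg hgen f σ η)
        _ = _ := mul_comm _ _
    -- No path uses a pair that is not a transition of `L`, so the junk value of `ω` there is
    -- multiplied by zero.
    · have hzero : ∀ α β, T σ η α β = 0 := by
        intro α β
        by_cases h' : IsTransition L' α β
        · simp [hT, pathUses_eq_zero h _ (hγ α β h').2.2.2]
        · simp [hT, h']
      simp [hzero, term_eq_zero hgen f h]
  have hsum : ∑ α : Ω, ∑ β : Ω, L' α β * (f α - f β) ^ 2 ≤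
      M * ∑ σ : Ω, ∑ η : Ω, L σ η * (f σ - f η) ^ 2 := by
    calc ∑ α : Ω, ∑ β : Ω, L' α β * (f α - f β) ^ 2
        ≤ ∑ α : Ω, ∑ β : Ω, ∑ σ : Ω, ∑ η : Ω, (f σ - f η) ^ 2 / ω σ η * T σ η α β :=
          Finset.sum_le_sum fun α _ => Finset.sum_le_sum fun β _ => hstep α β
      _ = ∑ p : Ω × Ω, ∑ q : Ω × Ω, (f q.1 - f q.2) ^ 2 / ω q.1 q.2 * T q.1 q.2 p.1 p.2 := by
          simp only [Fintype.sum_prod_type]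
      _ = ∑ q : Ω × Ω, ∑ p : Ω × Ω, (f q.1 - f q.2) ^ 2 / ω q.1 q.2 * T q.1 q.2 p.1 p.2 :=
          Finset.sum_comm
      _ = ∑ σ : Ω, ∑ η : Ω, (f σ - f η) ^ 2 / ω σ η * ∑ α : Ω, ∑ β : Ω, T σ η α β := by
          simp only [Fintype.sum_prod_type, Finset.mul_sum]
      _ ≤ ∑ σ : Ω, ∑ η : Ω, M * (L σ η * (f σ - f η) ^ 2) :=
          Finset.sum_le_sum fun σ _ => Finset.sum_le_sum fun η _ => hcong σ η
      _ = _ := by simp only [Finset.mul_sum]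
  rw [dirForm_unif, dirForm_unif]
  calc _ ≤ (1 / 2) * (1 / (Fintype.card Ω : ℝ)) *
        (M * ∑ σ : Ω, ∑ η : Ω, L σ η * (f σ - f η) ^ 2) :=
        mul_le_mul_of_nonneg_left hsum (by positivity)
    _ = _ := by ring

end PathLemmas

/-! ### Comparison of relaxation times -/

/-- weighted canonical paths method: for ergodic symmetric generators `L`, `L'`
on the same state space (hence both with uniform stationary distribution), a positive weight
function `ω` on the transitions of `L`, and a choice of a single canonical `L`-path
`γ_{α,β}` for each transition `(α,β)` of `L'`,
`τ(𝓛) ≤ τ(𝓛') · max_{(σ,η)} (1/(𝓛[σ→η]·ω(σ,η))) Σ_{(α,β) : γ_{α,β} ∋ (σ,η)} 𝓛'[α→β]·|γ_{α,β}|_ω`,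
uses counted with multiplicity. -/
theorem weighted_canonical_paths
    {Ω : Type} [Fintype Ω] [DecidableEq Ω] (hcard : 2 ≤ Fintype.card Ω)
    (L L' : Ω → Ω → ℝ)
    (hgen : IsGenerator L) (hgen' : IsGenerator L')
    (hsym : ∀ x y : Ω, L x y = L y x) (hsym' : ∀ x y : Ω, L' x y = L' y x)
    (herg : IsErgodicGen L) (herg' : IsErgodicGen L')
    (ω : Ω → Ω → ℝ) (hω : ∀ x y, IsTransition L x y → 0 < ω x y)
    (γpath : Ω → Ω → List Ω)
    (hγ : ∀ α β, IsTransition L' α β → IsLPath L α β (γpath α β))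
    (M : ℝ)
    (hM : IsGreatest
      {r : ℝ | ∃ σ η : Ω, IsTransition L σ η ∧
        r = (1 / (L σ η * ω σ η)) *
          ∑ α : Ω, ∑ β : Ω,
            if IsTransition L' α β then
              (pathUses (γpath α β) σ η : ℝ) * L' α β * pathWeight ω (γpath α β)
            else 0} M) :
    relaxTime (unif Ω) L ≤ relaxTime (unif Ω) L' * M := by
  have hne : ∃ a b : Ω, a ≠ b := Fintype.one_lt_card_iff.1 hcard
  have hdir := dirForm_le_of_paths hgen hgen' hω hγ (M := M)
    (fun σ η h => hM.2 ⟨σ, η, h, rfl⟩)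
  have hM0 : 0 ≤ M := by
    obtain ⟨σ, η, h, hr⟩ := hM.1
    rw [hr]
    have hL := h.2
    have hw := hω σ η h
    refine mul_nonneg (by positivity)
      (Finset.sum_nonneg fun α _ => Finset.sum_nonneg fun β _ => ?_)
    split_ifs with h'
    · exact mul_nonneg (mul_nonneg (Nat.cast_nonneg _) h'.2.le)
        (pathWeight_nonneg (fun x y hxy => (hω x y hxy).le) _ (hγ α β h').2.2.2)
    · exact le_rfl
  have hpos := specGap_pos hgen herg hne
  have hpos' := specGap_pos hgen' herg' hne
  have hquot : ∀ f : Ω → ℝ, (∃ a b : Ω, f a ≠ f b) →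
      specGap (unif Ω) L' ≤ M * (DirForm (unif Ω) L f / VarForm (unif Ω) f) := by
    intro f hf
    have hle : specGap (unif Ω) L' ≤ DirForm (unif Ω) L' f / VarForm (unif Ω) f := by
      refine csInf_le ⟨0, ?_⟩ ⟨f, hf, rfl⟩
      rintro r ⟨g, hg, rfl⟩
      exact div_nonneg (dirForm_nonneg hgen' g) (varForm_pos hg).le
    refine hle.trans ?_
    rw [← mul_div_assoc]
    exact div_le_div_of_nonneg_right (hdir f) (varForm_pos hf).le
  obtain ⟨a₀, b₀, hab⟩ := id hne
  have hf₀ : ∃ a b : Ω, (fun x => if x = a₀ then (1 : ℝ) else 0) a ≠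
      (fun x => if x = a₀ then (1 : ℝ) else 0) b := ⟨a₀, b₀, by simp [hab.symm]⟩
  have hMpos : 0 < M := by
    refine hM0.lt_of_ne fun h => ?_
    have := hquot _ hf₀
    rw [← h, zero_mul] at this
    exact absurd hpos' (not_lt.2 this)
  have hgap : specGap (unif Ω) L' / M ≤ specGap (unif Ω) L := by
    refine le_csInf ⟨_, _, hf₀, rfl⟩ ?_
    rintro r ⟨f, hf, rfl⟩
    rw [div_le_iff₀' hMpos]
    exact hquot f hf
  rw [div_le_iff₀' hMpos] at hgap
  unfold relaxTime
  rw [if_pos hne, if_pos hne, one_div_mul_eq_div, div_le_div_iff₀ hpos hpos']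
  linarith
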